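/- arXiv:1007.0962 — 6 statements merged into one kernel-verified Lean document; each statement's English description precedes it below -/
import Mathlib

section
/- Let a : ℝ → ℝ be a C¹ function with a(3t) > 0 for all t in an interval, and let f : ℝ → ℝ be a C¹ function with f ≥ 0. Define ρ(t,x) = f(x/a(3t)^{1/3})/a(3t)^{1/3} and u(t,x) = (ȧ(3t)/a(3t))·x, where ȧ denotes the derivative of a. Then ρ and u satisfy the one-dimensional mass (continuity) equation ∂ρ/∂t + u·∂ρ/∂x + ρ·∂u/∂x = 0 at every point (t,x) with t in that interval. -/
/-!
Write `s(t) = a(3t)^{1/3}`. The factor `3` inside `a` cancels the exponent `1/3`, so that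
`s' = H s` with `H = ȧ(3t)/a(3t)` (`hasDerivAt_scale`). Thus `u = H x` is the velocity field of
the dilation by `s`, and with `z = x / s` the chain and quotient rules give
`ρ_t = -H (x f'(z) / s² + f(z) / s)`, `u ρ_x = H x f'(z) / s²` and `ρ u_x = H f(z) / s`, which
sum to zero.
-/

/-- The scale factor `s(τ) = a(3τ)^{1/3}` has logarithmic derivative `ȧ(3t)/a(3t)`. -/
theorem hasDerivAt_scale {a : ℝ → ℝ} {t : ℝ} (ha : DifferentiableAt ℝ a (3 * t))
    (hpos : 0 < a (3 * t)) :
    HasDerivAt (fun τ : ℝ => (a (3 * τ)) ^ ((1:ℝ)/3))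
      (deriv a (3 * t) / a (3 * t) * (a (3 * t)) ^ ((1:ℝ)/3)) t := by
  have h3 : HasDerivAt (fun τ : ℝ => 3 * τ) 3 t := by
    simpa using (hasDerivAt_id t).const_mul (3:ℝ)
  have h := (ha.hasDerivAt.comp t h3).rpow_const (p := (1:ℝ)/3) (Or.inl hpos.ne')
  refine h.congr_deriv ?_
  simp only [Function.comp_apply]
  rw [Real.rpow_sub_one hpos.ne']
  ring

/-- the self-similar ansatz  ρ(t,x) = f(x/a(3t)^{1/3})/a(3t)^{1/3},
u(t,x) = (ȧ(3t)/a(3t))·x  satisfies the 1-D continuity equation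
ρ_t + u ρ_x + ρ u_x = 0 at every (t,x) with t in the interval I on which a(3t) > 0. -/
theorem stmt0 (a f : ℝ → ℝ) (I : Set ℝ) (hI : Convex ℝ I)
    (ha : ContDiff ℝ 1 a) (hf : ContDiff ℝ 1 f) (hf0 : ∀ x : ℝ, 0 ≤ f x)
    (hpos : ∀ t ∈ I, 0 < a (3 * t)) :
    ∀ t ∈ I, ∀ x : ℝ,
      deriv (fun τ : ℝ => f (x / (a (3 * τ)) ^ ((1:ℝ)/3)) / (a (3 * τ)) ^ ((1:ℝ)/3)) t
        + (deriv a (3 * t) / a (3 * t) * x)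
            * deriv (fun y : ℝ => f (y / (a (3 * t)) ^ ((1:ℝ)/3)) / (a (3 * t)) ^ ((1:ℝ)/3)) x
        + (f (x / (a (3 * t)) ^ ((1:ℝ)/3)) / (a (3 * t)) ^ ((1:ℝ)/3))
            * deriv (fun y : ℝ => deriv a (3 * t) / a (3 * t) * y) x = 0 := by
  intro t ht x
  have hp := hpos t ht
  have hs := hasDerivAt_scale (ha.differentiable one_ne_zero (3 * t)) hp
  have hs0 : (a (3 * t)) ^ ((1:ℝ)/3) ≠ 0 := (Real.rpow_pos_of_pos hp _).ne'
  have hfd : ∀ z : ℝ, HasDerivAt f (deriv f z) z :=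
    fun z => (hf.differentiable one_ne_zero z).hasDerivAt
  have h_t := (((hfd (x / (a (3 * t)) ^ ((1:ℝ)/3))).comp t
    ((hasDerivAt_const t x).div hs hs0)).div hs hs0).deriv
  have h_x := (((hfd (x / (a (3 * t)) ^ ((1:ℝ)/3))).comp x
    ((hasDerivAt_id x).div_const ((a (3 * t)) ^ ((1:ℝ)/3)))).div_const
      ((a (3 * t)) ^ ((1:ℝ)/3))).deriv
  have h_u := ((hasDerivAt_id x).const_mul (deriv a (3 * t) / a (3 * t))).deriv
  -- The rules above produce compositions that agree with the functions in the goal only up to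
  -- unfolding, hence `Eq.trans` by definitional equality instead of rewriting.
  refine (congrArg₂ (· + ·) (congrArg₂ (· + ·) h_t (congrArg (_ * ·) h_x))
    (congrArg (_ * ·) h_u)).trans ?_
  simp only [Function.comp_apply, Pi.div_apply]
  field_simp
  ring
end

section
/- Let ξ < 0 and let a be the maximal solution of the Emden equation ä(s) = ξ/a(s)^{1/3} with initial data a(0) = a₀ > 0 and ȧ(0) = a₁, defined on a maximal interval [0,S) on which a(s) > 0. Then S is finite and lim_{s→S⁻} a(s) = 0. -/
/-!
The energy `ȧ²/2 - (3/2) ξ a^{2/3}` is conserved and, because `ξ < 0`, is a sum of two nonnegative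
terms. Hence `a^{1/3}` and `|ȧ|` are bounded along the solution (`emden_bounds`), so `ä = ξ / a^{1/3}`
stays below a negative constant `-c` and `a(s) ≤ a₀ + a₁ s - c s² / 2` (`emden_parabola`).
Positivity of `a` therefore forces `S < ∞`.

As `s → S⁻`, the function `ȧ` is decreasing and bounded, and `a` is monotone up to a linear
term, so both converge, say to `p` and `L ≥ 0`. If `L > 0`, the vector field `(x, y) ↦ (y, ξ / x^{1/3})`
is `C¹` near `(L, p)`, and the Picard–Lindelöf solution through `(L, p)` at time `S`
(`emden_local_solution`), glued to `a` (`hasDerivAt_glue`), is a positive solution on a longer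
interval. This contradicts maximality, so `L = 0`.
-/

open Filter Topology Set

lemma antitoneOn_of_hasDerivAt {D : Set ℝ} (hD : Convex ℝ D) {f f' : ℝ → ℝ}
    (hf : ∀ s ∈ D, HasDerivAt f (f' s) s) (hn : ∀ s ∈ D, f' s ≤ 0) : AntitoneOn f D :=
  antitoneOn_of_hasDerivWithinAt_nonpos hD
    (fun s hs => (hf s hs).continuousAt.continuousWithinAt)
    (fun s hs => (hf s (interior_subset hs)).hasDerivWithinAt)
    (fun s hs => hn s (interior_subset hs))

/-- Energy bounds: along a positive solution, `ȧ` is bounded and `ä` is bounded above by a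
negative constant. -/
lemma emden_bounds {ξ : ℝ} (hξ : ξ < 0) {a a' : ℝ → ℝ} {D : Set ℝ} (hD : Convex ℝ D)
    (h0D : (0 : ℝ) ∈ D) (hD0 : ∀ s ∈ D, 0 ≤ s)
    (hpos : ∀ s ∈ D, 0 < a s) (hda : ∀ s ∈ D, HasDerivAt a (a' s) s)
    (hode : ∀ s ∈ D, HasDerivAt a' (ξ / (a s) ^ ((1:ℝ)/3)) s) :
    ∃ c > 0, ∃ C : ℝ, ∀ s ∈ D, ξ / (a s) ^ ((1:ℝ)/3) ≤ -c ∧ |a' s| ≤ C := by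
  set E : ℝ → ℝ := fun s => (a' s) ^ 2 / 2 - 3 / 2 * ξ * (a s) ^ ((2:ℝ)/3)
  have hanti : AntitoneOn E D := by
    refine antitoneOn_of_hasDerivAt (f' := fun _ => 0) hD (fun s hs => ?_) (fun _ _ => le_rfl)
    have h1 := (((hode s hs).pow 2).div_const 2).sub
      (((hda s hs).rpow_const (p := (2:ℝ)/3) (Or.inl (hpos s hs).ne')).const_mul (3 / 2 * ξ))
    refine h1.congr_deriv ?_
    have h3 : (2:ℝ)/3 - 1 = -(1/3) := by norm_num
    rw [h3, Real.rpow_neg (hpos s hs).le]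
    simp only [div_eq_mul_inv]
    ring
  have hsq : ∀ s ∈ D, (a s) ^ ((2:ℝ)/3) = ((a s) ^ ((1:ℝ)/3)) ^ 2 := by
    intro s hs
    rw [← Real.rpow_natCast, ← Real.rpow_mul (hpos s hs).le]
    norm_num
  set θ := E 0
  have hle : ∀ s ∈ D, (a' s) ^ 2 / 2 + 3 / 2 * (-ξ) * ((a s) ^ ((1:ℝ)/3)) ^ 2 ≤ θ := by
    intro s hs
    have h : E s ≤ θ := hanti h0D hs (hD0 s hs)
    have hEs : E s = (a' s) ^ 2 / 2 - 3 / 2 * ξ * (a s) ^ ((2:ℝ)/3) := rfl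
    rw [← hsq s hs]
    linarith
  have hnn : ∀ s, 0 ≤ 3 / 2 * (-ξ) * ((a s) ^ ((1:ℝ)/3)) ^ 2 := fun s => by
    have : 0 < -ξ := by linarith
    positivity
  have hθ : 0 ≤ θ := by
    have := hle 0 h0D
    have := hnn 0
    have := sq_nonneg (a' 0)
    linarith
  have hk : 0 < 3 / 2 * (-ξ) := by linarith
  set K := θ / (3 / 2 * (-ξ)) with hK
  have hK0 : 0 ≤ K := by positivity
  refine ⟨-ξ / (K + 1), div_pos (by linarith) (by linarith), θ + 1, fun s hs => ⟨?_, ?_⟩⟩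
  · have hq : 0 < (a s) ^ ((1:ℝ)/3) := Real.rpow_pos_of_pos (hpos s hs) _
    have h2 : ((a s) ^ ((1:ℝ)/3)) ^ 2 ≤ K := by
      rw [hK, le_div_iff₀ hk]
      have := hle s hs
      have := sq_nonneg (a' s)
      linarith
    have h3 : (a s) ^ ((1:ℝ)/3) ≤ K + 1 := by nlinarith
    have h4 : -ξ / (K + 1) ≤ -ξ / (a s) ^ ((1:ℝ)/3) :=
      div_le_div_of_nonneg_left (by linarith) hq h3
    rw [neg_div ((a s) ^ ((1:ℝ)/3)) ξ] at h4
    linarith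
  · have := hle s hs
    have := hnn s
    exact abs_le_of_sq_le_sq (by nlinarith) (by linarith)

/-- Integrating `ä ≤ -c` twice. -/
lemma emden_parabola {c : ℝ} {a a' a'' : ℝ → ℝ} {D : Set ℝ} (hD : Convex ℝ D)
    (h0D : (0 : ℝ) ∈ D) (hD0 : ∀ s ∈ D, 0 ≤ s)
    (hda : ∀ s ∈ D, HasDerivAt a (a' s) s) (hda' : ∀ s ∈ D, HasDerivAt a' (a'' s) s)
    (hc : ∀ s ∈ D, a'' s ≤ -c) :
    ∀ s ∈ D, a s ≤ a 0 + a' 0 * s - c * s ^ 2 / 2 := by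
  have h1 : AntitoneOn (fun s => a' s + c * s) D :=
    antitoneOn_of_hasDerivAt hD
      (fun s hs => (hda' s hs).add ((hasDerivAt_id s).const_mul c))
      (fun s hs => by have := hc s hs; linarith)
  have h2 : AntitoneOn (fun s => a s + (c * s ^ 2 / 2 - a' 0 * s)) D := by
    refine antitoneOn_of_hasDerivAt (f' := fun s => a' s + (c * s - a' 0)) hD
      (fun s hs => ?_) (fun s hs => ?_)
    · refine ((hda s hs).add (((((hasDerivAt_id s).pow 2).const_mul c).div_const 2).sub
        ((hasDerivAt_id s).const_mul (a' 0)))).congr_deriv ?_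
      simp
      ring
    · have := h1 h0D hs (hD0 s hs)
      simp only [mul_zero, add_zero] at this
      linarith
  intro s hs
  have := h2 h0D hs (hD0 s hs)
  simp only at this
  linarith

/-- A function that is `f` to the left of `T` and `g` from `T` on is differentiable at `T` as soon
as the values and the derivatives match in the limit. -/
lemma hasDerivAt_glue {f f' g : ℝ → ℝ} {T e : ℝ} (hf : Tendsto f (𝓝[<] T) (𝓝 (g T)))
    (hd : ∀ᶠ s in 𝓝[<] T, HasDerivAt f (f' s) s) (hf' : Tendsto f' (𝓝[<] T) (𝓝 e))
    (hg : HasDerivAt g e T) :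
    HasDerivAt (fun s => if s < T then f s else g s) e T := by
  set b : ℝ → ℝ := fun s => if s < T then f s else g s with hb
  have hbT : b T = g T := by simp [hb]
  have hbf : ∀ s < T, b =ᶠ[𝓝 s] f := fun s hs => by
    filter_upwards [Iio_mem_nhds hs] with x hx
    exact if_pos hx
  have hdb : ∀ᶠ s in 𝓝[<] T, HasDerivAt b (f' s) s := by
    filter_upwards [hd, self_mem_nhdsWithin] with s hs hsT
    exact hs.congr_of_eventuallyEq (hbf s hsT)
  have hl : HasDerivWithinAt b e (Iic T) T := by
    refine hasDerivWithinAt_Iic_of_tendsto_deriv (s := {s | s < T ∧ HasDerivAt b (f' s) s})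
      (fun s hs => hs.2.differentiableAt.differentiableWithinAt) ?_
      (inter_mem self_mem_nhdsWithin hdb) ?_
    · have : ContinuousWithinAt b (Iio T) T := by
        rw [ContinuousWithinAt, hbT]
        refine hf.congr' ?_
        filter_upwards [self_mem_nhdsWithin] with s hs
        exact (if_pos hs).symm
      exact this.mono fun s hs => hs.1
    · refine hf'.congr' ?_
      filter_upwards [hdb] with s hs
      exact hs.deriv.symm
  have hr : HasDerivWithinAt b e (Ici T) T :=
    hg.hasDerivWithinAt.congr (fun s hs => if_neg (not_lt.2 hs)) hbT
  have := hl.union hr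
  rwa [Iic_union_Ici, hasDerivWithinAt_univ] at this

/-- Picard–Lindelöf for the Emden equation with a positive initial value. -/
lemma emden_local_solution (ξ : ℝ) {L : ℝ} (hL : 0 < L) (p T : ℝ) :
    ∃ u u' : ℝ → ℝ, u T = L ∧ u' T = p ∧ ∃ ε > 0, ∀ t, |t - T| < ε →
      0 < u t ∧ HasDerivAt u (u' t) t ∧ HasDerivAt u' (ξ / (u t) ^ ((1:ℝ)/3)) t := by
  have hC : ContDiffAt ℝ 1 (fun x : ℝ × ℝ => (x.2, ξ / x.1 ^ ((1:ℝ)/3))) (L, p) :=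
    contDiffAt_snd.prodMk (contDiffAt_const.div
      (contDiffAt_fst.rpow_const_of_ne hL.ne') (Real.rpow_pos_of_pos hL _).ne')
  obtain ⟨u, huT, ε, hε, hu⟩ :=
    hC.exists_forall_mem_closedBall_exists_eq_forall_mem_Ioo_hasDerivAt₀ T
  have hcont : ContinuousAt (fun t => (u t).1) T :=
    (hu T ⟨by linarith, by linarith⟩).continuousAt.fst
  have hev : ∀ᶠ t in 𝓝 T, 0 < (u t).1 := by
    refine hcont.eventually (lt_mem_nhds ?_)
    simpa [huT] using hL
  obtain ⟨δ, hδ, hpos⟩ := Metric.eventually_nhds_iff.1 hev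
  refine ⟨fun t => (u t).1, fun t => (u t).2, by simp [huT], by simp [huT], min ε δ,
    lt_min hε hδ, fun t ht => ?_⟩
  have h1 := abs_lt.1 (ht.trans_le (min_le_left _ _))
  have h2 := hu t ⟨by linarith, by linarith⟩
  refine ⟨hpos (by rw [Real.dist_eq]; exact ht.trans_le (min_le_right _ _)), ?_, ?_⟩
  · simpa using h2.hasFDerivAt.fst.hasDerivAt
  · simpa using h2.hasFDerivAt.snd.hasDerivAt

/-- for ξ < 0, the maximal positive solution of the Emden equation
ä = ξ / a^{1/3}, a(0) = a₀ > 0, ȧ(0) = a₁, defined on a maximal interval [0,S),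
has S finite and a(s) → 0 as s → S⁻. -/
theorem stmt2 (ξ a₀ a₁ : ℝ) (hξ : ξ < 0) (ha₀ : 0 < a₀)
    (a a' : ℝ → ℝ) (S : EReal) (hS : (0 : EReal) < S)
    (h0 : a 0 = a₀) (h1 : a' 0 = a₁)
    (hpos : ∀ s : ℝ, 0 ≤ s → (s : EReal) < S → 0 < a s)
    (hda : ∀ s : ℝ, 0 ≤ s → (s : EReal) < S → HasDerivAt a (a' s) s)
    (hode : ∀ s : ℝ, 0 ≤ s → (s : EReal) < S →
      HasDerivAt a' (ξ / (a s) ^ ((1:ℝ)/3)) s)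
    (hmax : ∀ (b b' : ℝ → ℝ) (S' : EReal), S < S' →
      (∀ s : ℝ, 0 ≤ s → (s : EReal) < S → b s = a s) →
      ¬ (∀ s : ℝ, 0 ≤ s → (s : EReal) < S' →
          0 < b s ∧ HasDerivAt b (b' s) s ∧
            HasDerivAt b' (ξ / (b s) ^ ((1:ℝ)/3)) s)) :
    ∃ Sr : ℝ, S = (Sr : EReal) ∧
      Filter.Tendsto a (nhdsWithin Sr (Set.Ico 0 Sr)) (nhds 0) := by
  have hD : Convex ℝ {s : ℝ | 0 ≤ s ∧ (s : EReal) < S} := by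
    refine OrdConnected.convex ⟨fun x hx y hy z hz => ⟨hx.1.trans hz.1, ?_⟩⟩
    exact (EReal.coe_le_coe_iff.2 hz.2).trans_lt hy.2
  have h0D : (0 : ℝ) ∈ {s : ℝ | 0 ≤ s ∧ (s : EReal) < S} := ⟨le_rfl, by simpa using hS⟩
  obtain ⟨c, hc, C, hb⟩ := emden_bounds hξ hD h0D (fun s hs => hs.1)
    (fun s hs => hpos s hs.1 hs.2) (fun s hs => hda s hs.1 hs.2) (fun s hs => hode s hs.1 hs.2)
  have hpar := emden_parabola hD h0D (fun s hs => hs.1)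
    (fun s hs => hda s hs.1 hs.2) (fun s hs => hode s hs.1 hs.2) (fun s hs => (hb s hs).1)
  induction S with
  | bot => simp at hS
  | top =>
    exfalso
    -- at this time the bounding parabola `a₀ + a₁ s - c s² / 2` is negative
    set s := 1 + 2 * (a₀ + |a₁|) / c with hs
    have hs1 : 1 ≤ s := by
      have : 0 ≤ 2 * (a₀ + |a₁|) / c := by positivity
      linarith
    have hcs : c * s = c + 2 * (a₀ + |a₁|) := by rw [hs]; field_simp
    have h2 := hpar s ⟨by linarith, EReal.coe_lt_top s⟩
    have h3 := hpos s (by linarith) (EReal.coe_lt_top s)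
    rw [h0, h1] at h2
    have h4 : a₁ * s ≤ |a₁| * s := by gcongr; exact le_abs_self _
    have h5 : c * s ^ 2 / 2 = (c / 2 + a₀ + |a₁|) * s := by
      rw [sq, ← mul_assoc, hcs]; ring
    nlinarith
  | coe T =>
    have hT : 0 < T := by exact_mod_cast hS
    refine ⟨T, rfl, ?_⟩
    simp only [EReal.coe_lt_coe_iff] at hpos hda hode
    have hb' : ∀ s ∈ Ioo 0 T, ξ / (a s) ^ ((1:ℝ)/3) ≤ -c ∧ |a' s| ≤ C :=
      fun s hs => hb s ⟨hs.1.le, by exact_mod_cast hs.2⟩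
    have hne : (Ioo 0 T).Nonempty := nonempty_Ioo.2 hT
    have hev : ∀ᶠ s in 𝓝[<] T, s ∈ Ioo 0 T := Ioo_mem_nhdsLT hT
    obtain ⟨p, hp⟩ : ∃ p, Tendsto a' (𝓝[<] T) (𝓝 p) := by
      refine ⟨_, AntitoneOn.tendsto_nhdsWithin_Ioo_left hne
        (antitoneOn_of_hasDerivAt (convex_Ioo 0 T) (fun s hs => hode s hs.1.le hs.2)
          (fun s hs => by linarith [(hb' s hs).1])) ⟨-C, ?_⟩⟩
      rintro _ ⟨s, hs, rfl⟩
      exact (abs_le.1 (hb' s hs).2).1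
    obtain ⟨L, hL⟩ : ∃ L, Tendsto a (𝓝[<] T) (𝓝 L) := by
      -- `a(s) - C s` is decreasing because `ȧ ≤ C`
      have hlim := AntitoneOn.tendsto_nhdsWithin_Ioo_left (f := fun s => a s - C * s) hne
        (antitoneOn_of_hasDerivAt (convex_Ioo 0 T)
          (fun s hs => (hda s hs.1.le hs.2).sub ((hasDerivAt_id s).const_mul C))
          (fun s hs => by linarith [(abs_le.1 (hb' s hs).2).2])) ⟨-(|C| * T), by
            rintro _ ⟨s, hs, rfl⟩
            have h1 := hpos s hs.1.le hs.2
            have h2 : C * s ≤ |C| * T :=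
              (mul_le_mul_of_nonneg_right (le_abs_self C) hs.1.le).trans
                (mul_le_mul_of_nonneg_left hs.2.le (abs_nonneg C))
            simp only
            linarith⟩
      have hlin : Tendsto (fun s : ℝ => C * s) (𝓝[<] T) (𝓝 (C * T)) :=
        ((continuous_const.mul continuous_id).tendsto T).mono_left nhdsWithin_le_nhds
      exact ⟨_, (hlim.add hlin).congr fun s => by ring⟩
    have hL0 : 0 ≤ L := ge_of_tendsto hL (by
      filter_upwards [hev] with s hs using (hpos s hs.1.le hs.2).le)
    rcases hL0.eq_or_lt with h | hLpos
    · rw [nhdsWithin_Ico_eq_nhdsLT hT, h]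
      exact hL
    exfalso
    obtain ⟨u, u', huT, hu'T, ε, hε, hu⟩ := emden_local_solution ξ hLpos p T
    refine hmax (fun s => if s < T then a s else u s) (fun s => if s < T then a' s else u' s)
      ((T + ε : ℝ) : EReal) (by exact_mod_cast (by linarith : T < T + ε))
      (fun s _ hs => if_pos (by exact_mod_cast hs)) (fun s hs0 hs => ?_)
    have hs' : s < T + ε := by exact_mod_cast hs
    rcases lt_trichotomy s T with hlt | rfl | hgt
    · simp only [if_pos hlt]
      refine ⟨hpos s hs0 hlt, (hda s hs0 hlt).congr_of_eventuallyEq ?_,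
        (hode s hs0 hlt).congr_of_eventuallyEq ?_⟩ <;>
      · filter_upwards [Iio_mem_nhds hlt] with x hx
        exact if_pos hx
    · obtain ⟨h2, h3, h4⟩ := hu s (by simpa using hε)
      simp only [lt_irrefl, if_false]
      refine ⟨h2, hasDerivAt_glue (by rwa [huT]) ?_ (by rwa [hu'T]) h3,
        hasDerivAt_glue (f' := fun x => ξ / (a x) ^ ((1:ℝ)/3)) (by rwa [hu'T]) ?_ ?_ h4⟩
      · filter_upwards [hev] with x hx using hda x hx.1.le hx.2
      · filter_upwards [hev] with x hx using hode x hx.1.le hx.2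
      · rw [huT]
        exact tendsto_const_nhds.div (hL.rpow_const (Or.inl hLpos.ne'))
          (Real.rpow_pos_of_pos hLpos _).ne'
    · obtain ⟨h2, h3, h4⟩ := hu s (abs_lt.2 ⟨by linarith, by linarith⟩)
      simp only [if_neg hgt.not_gt]
      refine ⟨h2, h3.congr_of_eventuallyEq ?_, h4.congr_of_eventuallyEq ?_⟩ <;>
      · filter_upwards [Ioi_mem_nhds hgt] with x hx
        exact if_neg (not_lt.2 (le_of_lt hx))
end

section
/- (Theorem 1, case σ = 1, ξ > 0, a₀ > 0, interior verification.) Let ξ > 0, α > 0, and let a : [0,∞) → ℝ be a positive solution of ä(s) = ξ/(3·a(s)^{1/3}) with a(0) = a₀ > 0, ȧ(0) = a₁. Set f(η) = ξ·√(−η²/ξ + (α/ξ)²), ρ(t,x) = f(x/a(3t)^{1/3})/a(3t)^{1/3} and u(t,x) = (ȧ(3t)/a(3t))·x. Then at every point (t,x) with t ≥ 0 and (x/a(3t)^{1/3})² < α²/ξ, the pair (ρ, u) satisfies both equations of the 2-component Camassa-Holm system: ∂ρ/∂t + u·∂ρ/∂x + ρ·∂u/∂x = 0 and ∂m/∂t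 + 2·(∂u/∂x)·m + u·∂m/∂x + ρ·∂ρ/∂x = 0, where m = u − α²·∂²u/∂x² (and in fact ∂²u/∂x² = 0, so m = u). -/
/-!
Write `b t = a (3t) ^ (1/3)`. Then `b ^ 3 = a (3t)` and `b' = a' (3t) / b ^ 2`, so that
`u = (b' / b) x` is linear in `x` and `m = u`.

* Continuity equation: `ρ = f (x / b) / b` is the mass-preserving rescaling of the profile `f`, which
  is transported by the velocity `(b' / b) x` for every differentiable `f`
  (`hasDerivAt_rescale_time`, `hasDerivAt_rescale_space`).
* Momentum equation: the terms in `u` add up to `3 a'' (3t) x / a (3t) = ξ x / b ^ 4` by the differential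
  equation for `a`, while `f f' = -ξ η` (`hasDerivAt_profile`) gives `ρ ρ_x = -ξ x / b ^ 4`.

The condition on `x` makes the radicand of `f` positive, hence `f` differentiable at `x / b`.
-/

/-- Positivity of the radicand is what makes the square root differentiable. -/
theorem hasDerivAt_profile {ξ c η : ℝ} (hξ : ξ ≠ 0) (h : 0 < -η ^ 2 / ξ + c) :
    HasDerivAt (fun η : ℝ => ξ * Real.sqrt (-η ^ 2 / ξ + c))
      (-η / Real.sqrt (-η ^ 2 / ξ + c)) η := by
  have h1 : HasDerivAt (fun η : ℝ => -η ^ 2 / ξ + c) (-(2 * η) / ξ) η := by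
    simpa using (((hasDerivAt_id η).pow 2).neg.div_const ξ).add_const c
  have hs := Real.sqrt_pos.2 h
  refine ((h1.sqrt h.ne').const_mul ξ).congr_deriv ?_
  field_simp

theorem hasDerivAt_rescale_time {f b : ℝ → ℝ} {f' b' t x : ℝ} (hb : HasDerivAt b b' t)
    (hb0 : b t ≠ 0) (hf : HasDerivAt f f' (x / b t)) :
    HasDerivAt (fun τ => f (x / b τ) / b τ)
      (-(f' * x * b' / b t ^ 3) - f (x / b t) * b' / b t ^ 2) t := by
  have h1 : HasDerivAt (fun τ => x / b τ) (-(x * b') / b t ^ 2) t := by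
    exact ((hasDerivAt_const t x).div hb hb0).congr_deriv (by ring)
  have h2 : HasDerivAt (fun τ => f (x / b τ)) (f' * (-(x * b') / b t ^ 2)) t :=
    HasDerivAt.comp t hf h1
  refine (h2.div hb hb0).congr_deriv ?_
  field_simp

theorem hasDerivAt_rescale_space {f : ℝ → ℝ} {f' b x : ℝ}
    (hf : HasDerivAt f f' (x / b)) :
    HasDerivAt (fun y => f (y / b) / b) (f' / b ^ 2) x := by
  have h2 : HasDerivAt (fun y => f (y / b)) (f' * (1 / b)) x :=
    HasDerivAt.comp x hf ((hasDerivAt_id x).div_const b)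
  refine (h2.div_const b).congr_deriv ?_
  ring

/-- The cube root `b` of a positive function `A` satisfies `b' = A' / (3 b ^ 2)`. -/
theorem hasDerivAt_cbrt {A : ℝ → ℝ} {A' t : ℝ} (hA : HasDerivAt A A' t) (h : 0 < A t) :
    HasDerivAt (fun τ => A τ ^ ((1 : ℝ) / 3)) (A' / (3 * (A t ^ ((1 : ℝ) / 3)) ^ 2)) t := by
  refine (hA.rpow_const (p := (1 : ℝ) / 3) (Or.inl h.ne')).congr_deriv ?_
  have e : A t ^ ((1 : ℝ) / 3 - 1) = ((A t ^ ((1 : ℝ) / 3)) ^ 2)⁻¹ := by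
    rw [← Real.rpow_natCast, ← Real.rpow_mul h.le, ← Real.rpow_neg h.le]
    norm_num
  rw [e]
  field_simp

/-- Theorem 1, case σ = 1, ξ > 0, a₀ > 0, interior verification:
with a a positive solution of ä = ξ/(3a^{1/3}) on [0,∞), f(η) = ξ√(−η²/ξ+(α/ξ)²),
ρ(t,x) = f(x/a(3t)^{1/3})/a(3t)^{1/3}, u(t,x) = (ȧ(3t)/a(3t))x, m = u − α²u_xx,
both equations of the σ = 1 two-component Camassa–Holm system hold at every
(t,x) with t ≥ 0 and (x/a(3t)^{1/3})² < α²/ξ. -/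
theorem stmt9 (ξ α a₀ a₁ : ℝ) (hξ : 0 < ξ) (hα : 0 < α)
    (a a' : ℝ → ℝ)
    (h0 : a 0 = a₀) (ha₀ : 0 < a₀) (h1 : a' 0 = a₁)
    (hpos : ∀ s : ℝ, 0 ≤ s → 0 < a s)
    (hda : ∀ s : ℝ, 0 ≤ s → HasDerivAt a (a' s) s)
    (hode : ∀ s : ℝ, 0 ≤ s → HasDerivAt a' (ξ / (3 * (a s) ^ ((1:ℝ)/3))) s) :
    let f : ℝ → ℝ := fun η => ξ * Real.sqrt (-η ^ 2 / ξ + (α / ξ) ^ 2)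
    let ρ : ℝ → ℝ → ℝ := fun t x =>
      f (x / (a (3 * t)) ^ ((1:ℝ)/3)) / (a (3 * t)) ^ ((1:ℝ)/3)
    let u : ℝ → ℝ → ℝ := fun t x => a' (3 * t) / a (3 * t) * x
    let m : ℝ → ℝ → ℝ := fun t x => u t x - α ^ 2 * deriv (deriv (fun y => u t y)) x
    ∀ t x : ℝ, 0 ≤ t → (x / (a (3 * t)) ^ ((1:ℝ)/3)) ^ 2 < α ^ 2 / ξ →
      (deriv (fun τ => ρ τ x) t + u t x * deriv (fun y => ρ t y) x
          + ρ t x * deriv (fun y => u t y) x = 0) ∧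
      (deriv (fun τ => m τ x) t + 2 * deriv (fun y => u t y) x * m t x
          + u t x * deriv (fun y => m t y) x
          + ρ t x * deriv (fun y => ρ t y) x = 0) := by
  intro f ρ u m t x ht hx
  have hs : 0 ≤ 3 * t := by linarith
  have hA := hpos _ hs
  have h3 : HasDerivAt (fun τ : ℝ => 3 * τ) 3 t := by
    simpa using (hasDerivAt_id t).const_mul (3 : ℝ)
  have hAd : HasDerivAt (fun τ => a (3 * τ)) (a' (3 * t) * 3) t :=
    HasDerivAt.comp t (hda _ hs) h3
  have hA'd := HasDerivAt.comp t (hode _ hs) h3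
  have hbd := hasDerivAt_cbrt hAd hA
  have hb0 : 0 < a (3 * t) ^ ((1 : ℝ) / 3) := Real.rpow_pos_of_pos hA _
  have hb3 : (a (3 * t) ^ ((1 : ℝ) / 3)) ^ 3 = a (3 * t) := by
    rw [← Real.rpow_natCast, ← Real.rpow_mul hA.le]
    norm_num
  have hrad : 0 < -(x / a (3 * t) ^ ((1 : ℝ) / 3)) ^ 2 / ξ + (α / ξ) ^ 2 := by
    have h := div_lt_div_of_pos_right hx hξ
    have e : α ^ 2 / ξ / ξ = (α / ξ) ^ 2 := by field_simp
    rw [e] at h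
    rw [neg_div]
    linarith
  have hf := hasDerivAt_profile hξ.ne' hrad
  have hρt : HasDerivAt (fun τ => ρ τ x) _ t := hasDerivAt_rescale_time hbd hb0.ne' hf
  have hρx : HasDerivAt (fun y => ρ t y) _ x := hasDerivAt_rescale_space hf
  have hux : ∀ τ y : ℝ, HasDerivAt (fun z => u τ z) (a' (3 * τ) / a (3 * τ)) y := fun τ y => by
    simpa using (hasDerivAt_id y).const_mul (a' (3 * τ) / a (3 * τ))
  -- `u` is linear in the space variable, so `u_xx` vanishes identically.
  have hmu : m = u := by
    funext τ y
    have e : deriv (fun z => u τ z) = fun _ => a' (3 * τ) / a (3 * τ) :=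
      funext fun z => (hux τ z).deriv
    simp only [m, e, deriv_const, mul_zero, sub_zero]
  have hut : HasDerivAt (fun τ => u τ x) _ t := (hA'd.div hAd hA.ne').mul_const x
  rw [hmu, hρt.deriv, hρx.deriv, (hux t x).deriv, hut.deriv]
  simp only [ρ, u, f, Function.comp_apply]
  have hS := Real.sqrt_pos.2 hrad
  generalize Real.sqrt (-(x / a (3 * t) ^ ((1 : ℝ) / 3)) ^ 2 / ξ + (α / ξ) ^ 2) = S at hS ⊢
  generalize a (3 * t) ^ ((1 : ℝ) / 3) = b at hb0 hb3 ⊢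
  rw [← hb3]
  constructor
  · field_simp
    ring
  · field_simp
    ring
end

section
/- (Theorem 1, case σ = −1, ξ < 0, a₀ > 0, interior verification.) Let ξ < 0, α > 0, and let a be a positive solution of ä(s) = ξ/(3·a(s)^{1/3}) with a(0) = a₀ > 0, ȧ(0) = a₁, defined on a maximal interval where a > 0. Set f(η) = −ξ·√(η²/ξ + (α/ξ)²), ρ(t,x) = f(x/a(3t)^{1/3})/a(3t)^{1/3} and u(t,x) = (ȧ(3t)/a(3t))·x. Then at every point (t,x) in the domain with (x/a(3t)^{1/3})² < −α²/ξ, the pair (ρ, u) satisfies ∂ρ/∂t + u·∂ρ/∂x + ρ·∂u/∂x = 0 and ∂m/∂t + 2·(∂u/∂x)·m + u·∂m/∂x − ρ·∂ρ/∂x = 0, where m = u − α²·∂²u/∂x² = u. -/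
/-!
Write `c = a(3t)^{1/3}`, `h = ȧ(3t)/a(3t)`, `η = x/c`. Since `c³ = a(3t)`, the chain rule gives
`c_t = h c`, so `ρ = f(x/c)/c` is transported by the linear velocity `u = h x`: the continuity
equation holds for any differentiable profile `f`. Because `u` is linear in `x`, `m = u`, and
`u_t + 3 u u_x = 3 (ä/a) x = ξ x / c⁴`. Finally `f² = ξ η² + α²` on the region where the radicand
is positive, hence `f f' = ξ η` and `ρ ρ_x = ξ η / c³ = ξ x / c⁴`, which closes the second equation.
-/

/-- On the region `η² < -α²/ξ` the profile is differentiable and `f f' = ξ η`. -/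
lemma profile_hasDerivAt {ξ α η : ℝ} (hξ : ξ < 0) (hη : η ^ 2 < -α ^ 2 / ξ) :
    ∃ d : ℝ, HasDerivAt (fun η : ℝ => -ξ * Real.sqrt (η ^ 2 / ξ + (α / ξ) ^ 2)) d η ∧
      -ξ * Real.sqrt (η ^ 2 / ξ + (α / ξ) ^ 2) * d = ξ * η := by
  have hξ' : ξ ≠ 0 := hξ.ne
  have hR : 0 < η ^ 2 / ξ + (α / ξ) ^ 2 := by
    have h := (div_lt_div_right_of_neg hξ).mpr hη
    have e : -α ^ 2 / ξ / ξ = -(α / ξ) ^ 2 := by field_simp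
    linarith
  have hin : HasDerivAt (fun η : ℝ => η ^ 2 / ξ + (α / ξ) ^ 2) (2 * η / ξ) η := by
    simpa using ((hasDerivAt_pow 2 η).div_const ξ).add_const ((α / ξ) ^ 2)
  refine ⟨_, (hin.sqrt hR.ne').const_mul (-ξ), ?_⟩
  have hs := (Real.sqrt_pos.mpr hR).ne'
  generalize Real.sqrt (η ^ 2 / ξ + (α / ξ) ^ 2) = g at *
  field_simp

/-- The scale factor `c(t) = a(3t)^{1/3}` satisfies `c_t = (ȧ(3t)/a(3t)) c`. -/
lemma scale_hasDerivAt {a : ℝ → ℝ} {d t : ℝ} (hpos : 0 < a (3 * t))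
    (hd : HasDerivAt a d (3 * t)) :
    HasDerivAt (fun τ => (a (3 * τ)) ^ ((1:ℝ)/3))
      (d / a (3 * t) * (a (3 * t)) ^ ((1:ℝ)/3)) t := by
  have h3 : HasDerivAt (fun τ : ℝ => 3 * τ) 3 t := by
    simpa using (hasDerivAt_id t).const_mul (3:ℝ)
  have h3a : HasDerivAt (fun τ => a (3 * τ)) (d * 3) t := hd.comp t h3
  have h := h3a.rpow_const (p := (1:ℝ)/3) (Or.inl hpos.ne')
  convert h using 1
  rw [Real.rpow_sub_one hpos.ne']
  field_simp

/-- Theorem 1, case σ = −1, ξ < 0, a₀ > 0, interior verification: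
with a a positive solution of ä = ξ/(3a^{1/3}) on [0,S), f(η) = −ξ√(η²/ξ+(α/ξ)²),
ρ(t,x) = f(x/a(3t)^{1/3})/a(3t)^{1/3}, u(t,x) = (ȧ(3t)/a(3t))x, m = u − α²u_xx,
both equations of the σ = −1 two-component Camassa–Holm system hold at every
(t,x) in the domain with (x/a(3t)^{1/3})² < −α²/ξ. -/
theorem stmt12 (ξ α a₀ a₁ S : ℝ) (hξ : ξ < 0) (hα : 0 < α) (hS : 0 < S)
    (a a' : ℝ → ℝ)
    (h0 : a 0 = a₀) (ha₀ : 0 < a₀) (h1 : a' 0 = a₁)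
    (hpos : ∀ s : ℝ, 0 ≤ s → s < S → 0 < a s)
    (hda : ∀ s : ℝ, 0 ≤ s → s < S → HasDerivAt a (a' s) s)
    (hode : ∀ s : ℝ, 0 ≤ s → s < S →
      HasDerivAt a' (ξ / (3 * (a s) ^ ((1:ℝ)/3))) s) :
    let f : ℝ → ℝ := fun η => -ξ * Real.sqrt (η ^ 2 / ξ + (α / ξ) ^ 2)
    let ρ : ℝ → ℝ → ℝ := fun t x =>
      f (x / (a (3 * t)) ^ ((1:ℝ)/3)) / (a (3 * t)) ^ ((1:ℝ)/3)
    let u : ℝ → ℝ → ℝ := fun t x => a' (3 * t) / a (3 * t) * x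
    let m : ℝ → ℝ → ℝ := fun t x => u t x - α ^ 2 * deriv (deriv (fun y => u t y)) x
    ∀ t x : ℝ, 0 ≤ t → 3 * t < S →
      (x / (a (3 * t)) ^ ((1:ℝ)/3)) ^ 2 < -α ^ 2 / ξ →
      (deriv (fun τ => ρ τ x) t + u t x * deriv (fun y => ρ t y) x
          + ρ t x * deriv (fun y => u t y) x = 0) ∧
      (deriv (fun τ => m τ x) t + 2 * deriv (fun y => u t y) x * m t x
          + u t x * deriv (fun y => m t y) x
          - ρ t x * deriv (fun y => ρ t y) x = 0) := by
  intro f ρ u m t x ht hts hx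
  have hs0 : 0 ≤ 3 * t := by linarith
  have hA := hpos _ hs0 hts
  have hc := scale_hasDerivAt hA (hda _ hs0 hts)
  have h3 : HasDerivAt (fun τ : ℝ => 3 * τ) 3 t := by
    simpa using (hasDerivAt_id t).const_mul (3:ℝ)
  have hat : HasDerivAt (fun τ => a (3 * τ)) (a' (3 * t) * 3) t := (hda _ hs0 hts).comp t h3
  have hbt : HasDerivAt (fun τ => a' (3 * τ))
      (ξ / (3 * (a (3 * t)) ^ ((1:ℝ)/3)) * 3) t := (hode _ hs0 hts).comp t h3
  have hc0 : 0 < (a (3 * t)) ^ ((1:ℝ)/3) := Real.rpow_pos_of_pos hA _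
  have hc3 : ((a (3 * t)) ^ ((1:ℝ)/3)) ^ 3 = a (3 * t) := by
    rw [← Real.rpow_natCast, ← Real.rpow_mul hA.le]; norm_num
  have hux : ∀ τ y, HasDerivAt (fun y => u τ y) (a' (3 * τ) / a (3 * τ)) y := by
    intro τ y
    simpa [u] using (hasDerivAt_id y).const_mul (a' (3 * τ) / a (3 * τ))
  -- `u` is linear in `x`, so the second-derivative term of `m` vanishes identically.
  have hm : m = u := by
    funext τ y
    have e : deriv (fun y => u τ y) = fun _ => a' (3 * τ) / a (3 * τ) :=
      funext fun y => (hux τ y).deriv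
    simp only [m, e, deriv_const]
    ring
  obtain ⟨d, hd, hfd⟩ := profile_hasDerivAt hξ hx
  have hd' : HasDerivAt f d (x / (a (3 * t)) ^ ((1:ℝ)/3)) := hd
  have hfd' : f (x / (a (3 * t)) ^ ((1:ℝ)/3)) * d = ξ * (x / (a (3 * t)) ^ ((1:ℝ)/3)) := hfd
  have hρx : HasDerivAt (fun y => ρ t y)
      (d * (1 / (a (3 * t)) ^ ((1:ℝ)/3)) / (a (3 * t)) ^ ((1:ℝ)/3)) x :=
    (hd'.comp x ((hasDerivAt_id x).div_const _)).div_const _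
  have hηt := (hasDerivAt_const t x).div hc hc0.ne'
  have hρt := (hd'.comp t hηt).div hc hc0.ne'
  have hut := (hbt.div hat hA.ne').mul_const x
  have eρt : deriv (fun τ => ρ τ x) t = _ := hρt.deriv
  have eut : deriv (fun τ => u τ x) t = _ := hut.deriv
  rw [hm, eρt, eut, hρx.deriv, (hux t x).deriv]
  simp only [u, ρ, Function.comp, Pi.div_apply]
  generalize f (x / (a (3 * t)) ^ ((1:ℝ)/3)) = F at *
  generalize (a (3 * t)) ^ ((1:ℝ)/3) = c at *
  rw [← hc3]
  have hc0' := hc0.ne'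
  constructor
  · field_simp
    ring
  · have hρρ : F / c * (d * (1 / c) / c) = ξ * x / c ^ 4 := by
      calc F / c * (d * (1 / c) / c) = F * d / c ^ 3 := by field_simp
        _ = ξ * x / c ^ 4 := by rw [hfd']; field_simp
    rw [hρρ]
    field_simp
    ring
end

section
/- Reduction lemma: let σ ∈ {1,−1}, ξ ≠ 0, α ≥ 0, let a be a nonvanishing twice differentiable function and f a differentiable function. Define ρ(t,x) = f(x/a(3t)^{1/3})/a(3t)^{1/3} and u(t,x) = (ȧ(3t)/a(3t))·x, and m = u − α²·∂²u/∂x² (so m = u since u is linear in x). Then at any point, m_t + 2u_x m + u m_x + σρρ_x = (σ/a(3t))·[ (ξ/σ)·η + f(η)·f'(η) ] provided a satisfies ä(s) = ξ/(3a(s)^{1/3}), where η = x/a(3t)^{1/3} and s = 3t. Consequently, if in addition (ξ/σ)·η + f(η)f'(η) = 0, then m_t + 2u_x m + u m_x + σρρ_x = 0. -/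
/-!
The velocity is linear in `x`, say `u = c(t) x` with `c(t) = a'(3t) / a(3t)`. Hence `u_xx = 0`,
`m = u`, and `m_t + 2 u_x m + u m_x = (c' + 3 c²) x`. The quotient rule gives
`c' = 3 (a'' / a - c²)`, so the quadratic terms cancel and, by the equation for `a`, what remains
is `ξ x / (a · cbrt a)`. The pressure term is `σ ρ ρ_x = σ f f' / (cbrt a)³ = σ f f' / a`; summing
the two yields the claimed identity.
-/

/-- The real (odd) cube root: the odd function with (cbrt x)³ = x for all real x. -/
noncomputable def cbrt (x : ℝ) : ℝ := Real.sign x * |x| ^ ((1:ℝ)/3)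

theorem cbrt_pow_three (x : ℝ) : cbrt x ^ 3 = x := by
  have h : (|x| ^ ((1:ℝ)/3)) ^ 3 = |x| := by
    rw [← Real.rpow_natCast, ← Real.rpow_mul (abs_nonneg x)]
    norm_num
  rw [cbrt, mul_pow, h]
  rcases lt_trichotomy x 0 with hx | hx | hx
  · rw [Real.sign_of_neg hx, abs_of_neg hx]; ring
  · simp [hx]
  · rw [Real.sign_of_pos hx, abs_of_pos hx]; ring

theorem cbrt_ne_zero {x : ℝ} (hx : x ≠ 0) : cbrt x ≠ 0 := fun h =>
  hx (by rw [← cbrt_pow_three x, h]; norm_num)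

/-- reduction lemma: for the self-similar ansatz with a nonvanishing
solution of ä = ξ/(3a^{1/3}) (odd cube root), one has
m_t + 2u_x m + u m_x + σρρ_x = (σ/a(3t))·[(ξ/σ)η + f(η)f'(η)] with η = x/a(3t)^{1/3};
consequently the second Camassa–Holm equation holds whenever (ξ/σ)η + f f' ≡ 0. -/
theorem stmt13 (σ ξ α : ℝ) (hσ : σ = 1 ∨ σ = -1) (hξ : ξ ≠ 0) (hα : 0 ≤ α)
    (a a' f : ℝ → ℝ) (hanz : ∀ s : ℝ, a s ≠ 0) (hf : Differentiable ℝ f)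
    (hda : ∀ s : ℝ, HasDerivAt a (a' s) s)
    (hode : ∀ s : ℝ, HasDerivAt a' (ξ / (3 * cbrt (a s))) s) :
    let u : ℝ → ℝ → ℝ := fun t x => a' (3 * t) / a (3 * t) * x
    let ρ : ℝ → ℝ → ℝ := fun t x => f (x / cbrt (a (3 * t))) / cbrt (a (3 * t))
    let m : ℝ → ℝ → ℝ := fun t x => u t x - α ^ 2 * deriv (deriv (fun y => u t y)) x
    (∀ t x : ℝ,
      deriv (fun τ => m τ x) t + 2 * deriv (fun y => u t y) x * m t x
        + u t x * deriv (fun y => m t y) x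
        + σ * (ρ t x * deriv (fun y => ρ t y) x)
      = σ / a (3 * t) * (ξ / σ * (x / cbrt (a (3 * t)))
          + f (x / cbrt (a (3 * t))) * deriv f (x / cbrt (a (3 * t))))) ∧
    ((∀ η : ℝ, ξ / σ * η + f η * deriv f η = 0) →
      ∀ t x : ℝ,
        deriv (fun τ => m τ x) t + 2 * deriv (fun y => u t y) x * m t x
          + u t x * deriv (fun y => m t y) x
          + σ * (ρ t x * deriv (fun y => ρ t y) x) = 0) := by
  intro u ρ m
  have hux (t x : ℝ) : deriv (fun y => u t y) x = a' (3 * t) / a (3 * t) :=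
    (((hasDerivAt_id x).const_mul (a' (3 * t) / a (3 * t))).congr_deriv (mul_one _)).deriv
  have hm : m = u := by
    funext t x
    have h : deriv (fun y => u t y) = fun _ => a' (3 * t) / a (3 * t) := funext (hux t)
    simp only [m, h, deriv_const, mul_zero, sub_zero]
  have hut (t x : ℝ) : deriv (fun τ => u τ x) t =
      (ξ / (3 * cbrt (a (3 * t))) * 3 * a (3 * t) - a' (3 * t) * (a' (3 * t) * 3))
        / a (3 * t) ^ 2 * x := by
    have h3 : HasDerivAt (fun τ : ℝ => 3 * τ) 3 t := by
      simpa using (hasDerivAt_id t).const_mul (3 : ℝ)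
    exact ((((hode (3 * t)).comp t h3).div ((hda (3 * t)).comp t h3) (hanz _)).mul_const x).deriv
  have hρx (t x : ℝ) : deriv (fun y => ρ t y) x =
      deriv f (x / cbrt (a (3 * t))) * (1 / cbrt (a (3 * t))) / cbrt (a (3 * t)) :=
    (((hf (x / cbrt (a (3 * t)))).hasDerivAt.comp x
      ((hasDerivAt_id x).div_const (cbrt (a (3 * t))))).div_const _).deriv
  have key (t x : ℝ) :
      deriv (fun τ => m τ x) t + 2 * deriv (fun y => u t y) x * m t x
        + u t x * deriv (fun y => m t y) x
        + σ * (ρ t x * deriv (fun y => ρ t y) x)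
      = σ / a (3 * t) * (ξ / σ * (x / cbrt (a (3 * t)))
          + f (x / cbrt (a (3 * t))) * deriv f (x / cbrt (a (3 * t)))) := by
    have hσ0 : σ ≠ 0 := by rcases hσ with rfl | rfl <;> norm_num
    have hb := cbrt_ne_zero (hanz (3 * t))
    have hb3 := cbrt_pow_three (a (3 * t))
    rw [hm, hut, hux, hρx]
    simp only [u, ρ]
    generalize f (x / cbrt (a (3 * t))) = F
    generalize deriv f (x / cbrt (a (3 * t))) = G
    generalize cbrt (a (3 * t)) = b at *
    -- Writing `a = b³` turns the claim into an identity of rational functions in `b`.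
    rw [← hb3]
    field_simp
    ring
  refine ⟨key, fun h t x => ?_⟩
  rw [key, h, mul_zero]
end

section
/- (Explicit bound on the blowup time.) Let ξ < 0, a₀ > 0, a₁ ∈ ℝ, and let a be the maximal positive solution of ä(s) = ξ/a(s)^{1/3}, a(0) = a₀, ȧ(0) = a₁, with conserved energy θ = a₁²/2 − (3/2)ξa₀^{2/3} > 0. Then the time S at which a reaches 0 satisfies S ≤ 2·∫₀^{(2θ/(3|ξ|))^{3/2}} da/√(2θ − 3|ξ|a^{2/3}) = (2√2/(3|ξ|))·√(6/|ξ|)·(θπ/4). -/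
/-!
Write `m = √(3|ξ|)` and `t = √(2θ)`, so that conservation of energy reads
`a'² + m² a^{2/3} = t²`. The point `(a' / t, (m / t) a^{1/3})` therefore moves on the unit
circle, in the half where the second coordinate is positive, and `-arcsin (a' / t)` is the angle
`φ` with `sin φ = -a' / t` and `cos φ = (m / t) a^{1/3}`. In this parameter
the time element is a constant multiple of `cos² φ dφ`, so `φ + sin φ cos φ` grows along the orbit
at the constant rate `2 m³ / (3 t²)` (`orbit_time_le`). As its values lie in `[-π/2, π/2]`
(`abs_arcsin_add_le`), the orbit lasts at most `3 π t² / (2 m³)`.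

The integral has the explicit primitive `c (arcsin g - g √(1 - g²))` with `g = (m / t) x^{1/3}`
(`integral_orbit`); twice its value is the same number `3 π t² / (2 m³)`.
-/

open Set in
/-- A function with constant derivative `c` on `[0, S)` is affine there. -/
lemma affine_of_hasDerivAt {S c : ℝ} {f : ℝ → ℝ}
    (h : ∀ s : ℝ, 0 ≤ s → s < S → HasDerivAt f c s) {s : ℝ} (hs0 : 0 ≤ s) (hsS : s < S) :
    f s = f 0 + c * s := by
  have hd : ∀ x ∈ Icc 0 s, HasDerivAt (fun x => f x - c * x) 0 x := by
    intro x hx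
    exact ((h x hx.1 (hx.2.trans_lt hsS)).sub
      ((hasDerivAt_id x).const_mul c)).congr_deriv (by ring)
  have := constant_of_has_deriv_right_zero
    (fun x hx => (hd x hx).continuousAt.continuousWithinAt)
    (fun x hx => (hd x (Ico_subset_Icc_self hx)).hasDerivWithinAt) s ⟨hs0, le_rfl⟩
  simp only [mul_zero, sub_zero] at this
  linarith

lemma rpow_two_thirds {x : ℝ} (hx : 0 ≤ x) : x ^ ((2:ℝ)/3) = (x ^ ((1:ℝ)/3)) ^ 2 := by
  rw [← Real.rpow_natCast, ← Real.rpow_mul hx]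
  norm_num

lemma rpow_third_cube {x : ℝ} (hx : 0 ≤ x) : (x ^ ((1:ℝ)/3)) ^ 3 = x := by
  rw [← Real.rpow_natCast, ← Real.rpow_mul hx]
  norm_num

lemma hasDerivAt_rpow_third {x : ℝ} (hx : 0 < x) :
    HasDerivAt (fun x : ℝ => x ^ ((1:ℝ)/3)) (1 / (3 * (x ^ ((1:ℝ)/3)) ^ 2)) x := by
  convert Real.hasDerivAt_rpow_const (p := (1:ℝ)/3) (Or.inl hx.ne') using 1
  rw [← rpow_two_thirds hx.le, show (1:ℝ)/3 - 1 = -(2/3) by norm_num, Real.rpow_neg hx.le]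
  field_simp

lemma hasDerivAt_sqrt_one_sub_sq {u : ℝ} (h : 0 < 1 - u ^ 2) :
    HasDerivAt (fun u : ℝ => √(1 - u ^ 2)) (-u / √(1 - u ^ 2)) u := by
  have h1 : HasDerivAt (fun u : ℝ => 1 - u ^ 2) (-(2 * u)) u := by
    simpa using ((hasDerivAt_id u).pow 2).const_sub 1
  convert h1.sqrt h.ne' using 1
  have := Real.sqrt_pos.2 h
  field_simp

lemma hasDerivAt_arcsin_of_sq_lt {u : ℝ} (h : 0 < 1 - u ^ 2) :
    HasDerivAt Real.arcsin (1 / √(1 - u ^ 2)) u :=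
  Real.hasDerivAt_arcsin (by rintro rfl; norm_num at h) (by rintro rfl; norm_num at h)

/-- With `u = sin φ` the function is `φ + sin (2φ) / 2`, which is at most `π/2` since
`sin (2φ) = sin (π - 2φ) ≤ π - 2φ`. -/
lemma arcsin_add_le (u : ℝ) (h1 : -1 ≤ u) (h2 : u ≤ 1) :
    Real.arcsin u + u * √(1 - u ^ 2) ≤ Real.pi / 2 := by
  have hs := Real.sin_arcsin h1 h2
  have hc := Real.cos_arcsin u
  have h := Real.sin_le (x := Real.pi - 2 * Real.arcsin u)
    (by linarith [Real.arcsin_le_pi_div_two u])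
  rw [Real.sin_pi_sub, Real.sin_two_mul, hs, hc] at h
  linarith

lemma abs_arcsin_add_le (u : ℝ) (h1 : -1 ≤ u) (h2 : u ≤ 1) :
    |Real.arcsin u + u * √(1 - u ^ 2)| ≤ Real.pi / 2 := by
  refine abs_le.2 ⟨?_, arcsin_add_le u h1 h2⟩
  have := arcsin_add_le (-u) (by linarith) (by linarith)
  rw [Real.arcsin_neg, neg_sq] at this
  linarith

/-- The energy `a'² + m² a^{2/3}` is conserved along `ä = -(m²/3) / a^{1/3}`. -/
lemma energy_conserved {S m : ℝ} {a a' : ℝ → ℝ}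
    (hpos : ∀ s : ℝ, 0 ≤ s → s < S → 0 < a s)
    (hda : ∀ s : ℝ, 0 ≤ s → s < S → HasDerivAt a (a' s) s)
    (hode : ∀ s : ℝ, 0 ≤ s → s < S →
      HasDerivAt a' (-(m ^ 2 / 3) / (a s) ^ ((1:ℝ)/3)) s)
    {s : ℝ} (hs0 : 0 ≤ s) (hsS : s < S) :
    a' s ^ 2 + m ^ 2 * ((a s) ^ ((1:ℝ)/3)) ^ 2
      = a' 0 ^ 2 + m ^ 2 * ((a 0) ^ ((1:ℝ)/3)) ^ 2 := by
  have h := affine_of_hasDerivAt (S := S) (c := 0)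
    (f := fun s => a' s ^ 2 + m ^ 2 * ((a s) ^ ((1:ℝ)/3)) ^ 2) ?_ hs0 hsS
  · simpa using h
  · intro x hx0 hxS
    have hy : 0 < (a x) ^ ((1:ℝ)/3) := Real.rpow_pos_of_pos (hpos x hx0 hxS) _
    have hr : HasDerivAt (fun s => (a s) ^ ((1:ℝ)/3))
        (1 / (3 * ((a x) ^ ((1:ℝ)/3)) ^ 2) * a' x) x :=
      (hasDerivAt_rpow_third (hpos x hx0 hxS)).comp x (hda x hx0 hxS)
    refine (((hode x hx0 hxS).pow 2).add ((hr.pow 2).const_mul (m ^ 2))).congr_deriv ?_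
    field_simp
    ring

/-- An orbit of energy `t²` stays positive for a time at most `3 π t² / (2 m³)`. -/
lemma orbit_time_le {S m t : ℝ} (hm : 0 < m) (ht : 0 < t) (hS : 0 < S) {a a' : ℝ → ℝ}
    (hpos : ∀ s : ℝ, 0 ≤ s → s < S → 0 < a s)
    (hode : ∀ s : ℝ, 0 ≤ s → s < S →
      HasDerivAt a' (-(m ^ 2 / 3) / (a s) ^ ((1:ℝ)/3)) s)
    (hE : ∀ s : ℝ, 0 ≤ s → s < S →
      a' s ^ 2 + m ^ 2 * ((a s) ^ ((1:ℝ)/3)) ^ 2 = t ^ 2) :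
    S ≤ 3 * Real.pi * t ^ 2 / (2 * m ^ 3) := by
  have hu : ∀ s : ℝ, 0 ≤ s → s < S →
      1 - (a' s / t) ^ 2 = (m / t * (a s) ^ ((1:ℝ)/3)) ^ 2 := by
    intro s hs0 hsS
    have := hE s hs0 hsS
    field_simp
    linarith
  have hg : ∀ s : ℝ, 0 ≤ s → s < S → 0 < m / t * (a s) ^ ((1:ℝ)/3) := fun s hs0 hsS =>
    mul_pos (div_pos hm ht) (Real.rpow_pos_of_pos (hpos s hs0 hsS) _)
  set f : ℝ → ℝ := fun s => Real.arcsin (a' s / t) + a' s / t * √(1 - (a' s / t) ^ 2) with hf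
  have hd : ∀ s : ℝ, 0 ≤ s → s < S → HasDerivAt f (-(2 * m ^ 3 / (3 * t ^ 2))) s := by
    intro s hs0 hsS
    have hp : 0 < 1 - (a' s / t) ^ 2 := by
      rw [hu s hs0 hsS]
      exact pow_pos (hg s hs0 hsS) 2
    have hsq : √(1 - (a' s / t) ^ 2) = m / t * (a s) ^ ((1:ℝ)/3) := by
      rw [hu s hs0 hsS, Real.sqrt_sq (hg s hs0 hsS).le]
    have hF : HasDerivAt (fun u : ℝ => Real.arcsin u + u * √(1 - u ^ 2))
        (2 * √(1 - (a' s / t) ^ 2)) (a' s / t) := by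
      refine ((hasDerivAt_arcsin_of_sq_lt hp).add
        ((hasDerivAt_id _).mul (hasDerivAt_sqrt_one_sub_sq hp))).congr_deriv ?_
      have h1 := Real.sqrt_pos.2 hp
      have h2 := Real.sq_sqrt hp.le
      set w := √(1 - (a' s / t) ^ 2)
      set u := a' s / t
      field_simp
      linarith
    refine (hF.comp s ((hode s hs0 hsS).div_const t)).congr_deriv ?_
    have hy : 0 < (a s) ^ ((1:ℝ)/3) := Real.rpow_pos_of_pos (hpos s hs0 hsS) _
    rw [hsq]
    field_simp
  have hb : ∀ s : ℝ, 0 ≤ s → s < S → |f s| ≤ Real.pi / 2 := by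
    intro s hs0 hsS
    have h1 : (a' s / t) ^ 2 ≤ 1 := by
      linarith [hu s hs0 hsS, pow_pos (hg s hs0 hsS) 2]
    have h2 := abs_le.1 ((sq_le_one_iff_abs_le_one _).1 h1)
    exact abs_arcsin_add_le _ h2.1 h2.2
  refine le_of_forall_lt_imp_le_of_dense fun s hsS => ?_
  rcases le_total s 0 with hs0 | hs0
  · exact hs0.trans (by positivity)
  · have h1 := affine_of_hasDerivAt hd hs0 hsS
    have h2 := (abs_le.1 (hb s hs0 hsS)).1
    have h3 := (abs_le.1 (hb 0 le_rfl hS)).2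
    have h4 : 2 * m ^ 3 / (3 * t ^ 2) * s ≤ Real.pi := by linarith
    rw [le_div_iff₀ (by positivity)]
    rw [div_mul_eq_mul_div, div_le_iff₀ (by positivity)] at h4
    linarith

open Set in
lemma integral_orbit {m t : ℝ} (hm : 0 < m) (ht : 0 < t) :
    ∫ x in (0:ℝ)..((t / m) ^ 3), 1 / √(t ^ 2 - m ^ 2 * x ^ ((2:ℝ)/3))
      = 3 * Real.pi * t ^ 2 / (4 * m ^ 3) := by
  have hA : 0 < (t / m) ^ 3 := by positivity
  set g : ℝ → ℝ := fun x => m / t * x ^ ((1:ℝ)/3) with hgdef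
  -- The constant makes the derivative equal to the integrand, because `g³ = (m / t)³ x`.
  set H : ℝ → ℝ := fun x =>
    3 * t ^ 2 / (2 * m ^ 3) * (Real.arcsin (g x) - g x * √(1 - g x ^ 2)) with hH
  have hgc : Continuous g :=
    continuous_const.mul (Real.continuous_rpow_const (by norm_num))
  have hHc : Continuous H := by
    have := Real.continuous_arcsin.comp hgc
    exact continuous_const.mul (this.sub (hgc.mul (continuous_const.sub (hgc.pow 2)).sqrt))
  have hd : ∀ x ∈ Ioo 0 ((t / m) ^ 3),
      HasDerivAt H (1 / √(t ^ 2 - m ^ 2 * x ^ ((2:ℝ)/3))) x := by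
    intro x hx
    have hy : 0 < x ^ ((1:ℝ)/3) := Real.rpow_pos_of_pos hx.1 _
    have hy1 : x ^ ((1:ℝ)/3) < t / m := by
      refine lt_of_pow_lt_pow_left₀ 3 (by positivity) ?_
      rw [rpow_third_cube hx.1.le]
      exact hx.2
    have hg0 : 0 < g x := mul_pos (div_pos hm ht) hy
    have hg1 : g x < 1 := by
      calc g x < m / t * (t / m) := mul_lt_mul_of_pos_left hy1 (div_pos hm ht)
        _ = 1 := by field_simp
    have hp : 0 < 1 - g x ^ 2 := by nlinarith
    have hF : HasDerivAt (fun u : ℝ => Real.arcsin u - u * √(1 - u ^ 2))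
        (2 * g x ^ 2 / √(1 - g x ^ 2)) (g x) := by
      refine ((hasDerivAt_arcsin_of_sq_lt hp).sub
        ((hasDerivAt_id _).mul (hasDerivAt_sqrt_one_sub_sq hp))).congr_deriv ?_
      have h1 := Real.sqrt_pos.2 hp
      have h2 := Real.sq_sqrt hp.le
      set w := √(1 - g x ^ 2)
      field_simp
      linarith
    refine ((hF.comp x ((hasDerivAt_rpow_third hx.1).const_mul (m / t))).const_mul
      (3 * t ^ 2 / (2 * m ^ 3))).congr_deriv ?_
    have hsq : √(t ^ 2 - m ^ 2 * x ^ ((2:ℝ)/3)) = t * √(1 - g x ^ 2) := by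
      rw [rpow_two_thirds hx.1.le, show t ^ 2 - m ^ 2 * (x ^ ((1:ℝ)/3)) ^ 2
        = t ^ 2 * (1 - g x ^ 2) by simp only [hgdef]; field_simp,
        Real.sqrt_mul (sq_nonneg t), Real.sqrt_sq ht.le]
    have h1 := Real.sqrt_pos.2 hp
    rw [hsq]
    set w := √(1 - g x ^ 2)
    simp only [hgdef]
    field_simp
  have hint : IntervalIntegrable (fun x : ℝ => 1 / √(t ^ 2 - m ^ 2 * x ^ ((2:ℝ)/3)))
      MeasureTheory.volume 0 ((t / m) ^ 3) := by
    rw [intervalIntegrable_iff_integrableOn_Ioc_of_le hA.le]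
    exact intervalIntegral.integrableOn_deriv_of_nonneg hHc.continuousOn hd
      fun x _ => by positivity
  rw [intervalIntegral.integral_eq_sub_of_hasDerivAt_of_le hA.le hHc.continuousOn hd hint]
  have hg0 : g 0 = 0 := by simp [hgdef]
  have hgA : g ((t / m) ^ 3) = 1 := by
    have : ((t / m) ^ 3 : ℝ) ^ ((1:ℝ)/3) = t / m := by
      rw [← Real.rpow_natCast, ← Real.rpow_mul (by positivity)]
      norm_num
    simp only [hgdef, this]
    field_simp
  simp only [hH, hg0, hgA]
  simp
  field_simp
  norm_num


/-- explicit bound on the blowup time: for ξ < 0 and the maximal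
positive solution of ä = ξ/a^{1/3} with a(0) = a₀ > 0, ȧ(0) = a₁, reaching 0 at
time S, with conserved energy θ = a₁²/2 − (3/2)ξ a₀^{2/3} > 0, one has
S ≤ 2∫₀^{(2θ/(3|ξ|))^{3/2}} da/√(2θ − 3|ξ|a^{2/3}) = (2√2/(3|ξ|))√(6/|ξ|)(θπ/4). -/
theorem stmt18 (ξ a₀ a₁ S θ : ℝ) (hξ : ξ < 0) (ha₀ : 0 < a₀) (hS : 0 < S)
    (a a' : ℝ → ℝ)
    (h0 : a 0 = a₀) (h1 : a' 0 = a₁)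
    (hpos : ∀ s : ℝ, 0 ≤ s → s < S → 0 < a s)
    (hda : ∀ s : ℝ, 0 ≤ s → s < S → HasDerivAt a (a' s) s)
    (hode : ∀ s : ℝ, 0 ≤ s → s < S →
      HasDerivAt a' (ξ / (a s) ^ ((1:ℝ)/3)) s)
    (hlim : Filter.Tendsto a (nhdsWithin S (Set.Ico 0 S)) (nhds 0))
    (hθ : θ = a₁ ^ 2 / 2 - 3 / 2 * ξ * a₀ ^ ((2:ℝ)/3)) (hθpos : 0 < θ) :
    S ≤ 2 * (∫ x in (0:ℝ)..((2 * θ / (3 * |ξ|)) ^ ((3:ℝ)/2)),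
          1 / Real.sqrt (2 * θ - 3 * |ξ| * x ^ ((2:ℝ)/3))) ∧
    2 * (∫ x in (0:ℝ)..((2 * θ / (3 * |ξ|)) ^ ((3:ℝ)/2)),
          1 / Real.sqrt (2 * θ - 3 * |ξ| * x ^ ((2:ℝ)/3)))
      = 2 * Real.sqrt 2 / (3 * |ξ|) * Real.sqrt (6 / |ξ|) * (θ * Real.pi / 4) := by
  have hk : 0 < |ξ| := abs_pos.2 hξ.ne
  obtain ⟨m, hm, hm2⟩ : ∃ m : ℝ, 0 < m ∧ 3 * |ξ| = m ^ 2 :=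
    ⟨√(3 * |ξ|), by positivity, (Real.sq_sqrt (by positivity)).symm⟩
  obtain ⟨t, ht, ht2⟩ : ∃ t : ℝ, 0 < t ∧ 2 * θ = t ^ 2 :=
    ⟨√(2 * θ), by positivity, (Real.sq_sqrt (by positivity)).symm⟩
  have hξm : ξ = -(m ^ 2 / 3) := by
    rw [abs_of_neg hξ] at hm2
    linarith
  have hA : (2 * θ / (3 * |ξ|)) ^ ((3:ℝ)/2) = (t / m) ^ 3 := by
    rw [hm2, ht2, ← div_pow, ← Real.rpow_natCast, ← Real.rpow_natCast,
      ← Real.rpow_mul (by positivity)]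
    norm_num
  rw [hA]
  simp only [hm2, ht2]
  rw [integral_orbit hm ht]
  constructor
  · have hode' : ∀ s : ℝ, 0 ≤ s → s < S →
        HasDerivAt a' (-(m ^ 2 / 3) / (a s) ^ ((1:ℝ)/3)) s := by
      rw [← hξm]
      exact hode
    refine (orbit_time_le hm ht hS hpos hode' fun s hs0 hsS => ?_).trans_eq (by ring)
    rw [energy_conserved hpos hda hode' hs0 hsS, h0, h1, ← rpow_two_thirds ha₀.le, ← ht2, hθ, hξm]
    ring
  · have h6 : 2 * √2 * √(6 / |ξ|) = 12 / m := by
      rw [mul_assoc, ← Real.sqrt_mul (by norm_num),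
        show 2 * (6 / |ξ|) = (6 / m) ^ 2 by
          rw [show |ξ| = m ^ 2 / 3 by linarith]; field_simp; norm_num,
        Real.sqrt_sq (by positivity)]
      ring
    rw [show 2 * √2 / m ^ 2 * √(6 / |ξ|) = 2 * √2 * √(6 / |ξ|) / m ^ 2 by ring, h6,
      show θ = t ^ 2 / 2 by linarith]
    field_simp
    norm_num
end
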